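/- (Case III of the proof of Theorem 3.1, conditional form.) Assume S is regular and the pointwise Γ-consistency hypothesis holds with Γ(t) = β·t^α for some α ∈ (0,1] and β > 0. Let L ∈ A and s ∈ S with sel(s) = j₀ for some j₀ ∈ {1,...,n_e}, and assume c̄_0 ≤ c̄_j for all j = 1,...,n_e. Then C(L,s) − C* ≥ β^{−1/α}·(c̄_{j₀} − c̄_0)^{1/α} / (n_e·(l̄ + Σ_{j=1}^{n_e} C_j))^{1/α − 1}, where c̄_{j₀} − c̄_0 = D(L,s) − D*. -/

import Mathlib

open Finset

/-- Conditional deferral error `D(L,s)`. -/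
noncomputable def Dcond (nE : ℕ) (cbar : Fin nE → ℝ)
    (sel : (Fin (nE + 1) → ℝ) → Fin (nE + 1)) (L : ℝ) (s : Fin (nE + 1) → ℝ) : ℝ :=
  (if sel s = 0 then L else 0) + ∑ j : Fin nE, if sel s = j.succ then cbar j else 0

/-- Best-in-class conditional deferral error `D* = min{c̄₀, c̄₁, ..., c̄_{n_e}}`, with
`c̄₀ = sInf A`. -/
noncomputable def Dstar (nE : ℕ) (cbar : Fin nE → ℝ) (A : Set ℝ) : ℝ :=
  min (sInf A) (⨅ j, cbar j)

/-- Conditional surrogate error `C(L,s)`. -/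
noncomputable def Ccond (nE : ℕ) (cbar : Fin nE → ℝ)
    (ℓ : (Fin (nE + 1) → ℝ) → Fin (nE + 1) → ℝ) (L : ℝ) (s : Fin (nE + 1) → ℝ) : ℝ :=
  (∑ j, cbar j) * ℓ s 0
    + ∑ j : Fin nE, (L + ∑ j' ∈ univ.erase j, cbar j') * ℓ s j.succ
    - ((nE : ℝ) - 1) * L

/-- Best-in-class conditional surrogate error `C*`. -/
noncomputable def Cstar (nE : ℕ) (cbar : Fin nE → ℝ)
    (ℓ : (Fin (nE + 1) → ℝ) → Fin (nE + 1) → ℝ) (A : Set ℝ)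
    (S : Set (Fin (nE + 1) → ℝ)) : ℝ :=
  sInf {u | ∃ L' ∈ A, ∃ s' ∈ S, u = Ccond nE cbar ℓ L' s'}

/-!
Up to the additive constant `(n_e - 1) L`, the conditional surrogate error `C(L, s)` is the
expected surrogate loss at `s` under the nonnegative weights `w_0 = ∑ j, c̄_j` and
`w_j = L + ∑ j' ≠ j, c̄_j'`, whose total mass is `n_e (L + ∑ j, c̄_j)`. Since
`w_0 - w_j = c̄_j - L`, taking `L = c̄_0` bounds the deferral regret of selecting `j₀` by the
zero-one regret for `w`. Rescaling the consistency bound from probability vectors to `w` gives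
`c̄_{j₀} - c̄_0 ≤ β W ^ (1 - α) R ^ α`, where `W` is the mass of `w` and `R` the surrogate regret
for `w`. Finally `R ≤ C(L, s) - C*`, because `C` is nondecreasing and continuous in `L`.
-/

section ZeroOneLoss

variable {ι X : Type*} [DecidableEq ι] {sel : X → ι} {ℓ : X → ι → ℝ}

/-- The zero-one loss of the label selected at a score. -/
def zeroOneLoss (sel : X → ι) (s : X) (j : ι) : ℝ :=
  if sel s ≠ j then 1 else 0

theorem zeroOneLoss_nonneg (sel : X → ι) : 0 ≤ zeroOneLoss sel := fun s j => by
  unfold zeroOneLoss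
  split_ifs <;> simp

theorem zeroOneLoss_le (hℓ0 : ∀ s j, 0 ≤ ℓ s j) (hℓ1 : ∀ s j, j ≠ sel s → 1 ≤ ℓ s j) :
    zeroOneLoss sel ≤ ℓ := fun s j => by
  unfold zeroOneLoss
  split_ifs with h
  exacts [hℓ1 s j h.symm, hℓ0 s j]

end ZeroOneLoss

section PointwiseRegret

variable {ι X : Type*} [Fintype ι] {S : Set X} {φ ℓ : X → ι → ℝ} {w : ι → ℝ} {s s₀ : X}

/-- The excess of the expected loss `∑ j, w j * φ s j` over its infimum on `S`. The weights `w` need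
not sum to one, so that the regret is homogeneous in them. -/
noncomputable def pointwiseRegret (S : Set X) (φ : X → ι → ℝ) (w : ι → ℝ) (s : X) : ℝ :=
  w ⬝ᵥ φ s - sInf {v | ∃ s' ∈ S, v = w ⬝ᵥ φ s'}

theorem sInf_expectedLoss_le (hφ : 0 ≤ φ) (hw : 0 ≤ w) (hs : s ∈ S) :
    sInf {v | ∃ s' ∈ S, v = w ⬝ᵥ φ s'} ≤ w ⬝ᵥ φ s := by
  refine csInf_le ⟨0, ?_⟩ ⟨s, hs, rfl⟩
  rintro _ ⟨s', -, rfl⟩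
  exact dotProduct_nonneg_of_nonneg hw (hφ s')

theorem pointwiseRegret_nonneg (hφ : 0 ≤ φ) (hw : 0 ≤ w) (hs : s ∈ S) :
    0 ≤ pointwiseRegret S φ w s :=
  sub_nonneg.2 (sInf_expectedLoss_le hφ hw hs)

open scoped Pointwise in
theorem pointwiseRegret_smul {c : ℝ} (hc : 0 ≤ c) :
    pointwiseRegret S φ (c • w) s = c * pointwiseRegret S φ w s := by
  have hset : {v | ∃ s' ∈ S, v = (c • w) ⬝ᵥ φ s'} = c • {v | ∃ s' ∈ S, v = w ⬝ᵥ φ s'} := by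
    ext v
    simp only [smul_dotProduct, Set.mem_smul_set, Set.mem_ofPred_eq]
    grind
  rw [pointwiseRegret, hset, Real.sInf_smul_of_nonneg hc, smul_dotProduct, pointwiseRegret,
    smul_eq_mul, smul_eq_mul, mul_sub]

variable [DecidableEq ι] {sel : X → ι}

theorem dotProduct_zeroOneLoss (sel : X → ι) (w : ι → ℝ) (s : X) :
    w ⬝ᵥ zeroOneLoss sel s = ∑ j, w j - w (sel s) := by
  have h : zeroOneLoss sel s = 1 - Pi.single (sel s) 1 := by
    ext j
    by_cases hj : sel s = j <;> simp [zeroOneLoss, hj]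
  rw [h, dotProduct_sub, dotProduct_one, dotProduct_single_one]

theorem sub_le_pointwiseRegret_zeroOneLoss (hw : 0 ≤ w) (hs₀ : s₀ ∈ S) :
    w (sel s₀) - w (sel s) ≤ pointwiseRegret S (zeroOneLoss sel) w s := by
  have h := sInf_expectedLoss_le (zeroOneLoss_nonneg sel) hw hs₀
  rw [dotProduct_zeroOneLoss] at h
  rw [pointwiseRegret, dotProduct_zeroOneLoss]
  linarith

/-- Pointwise `Γ`-consistency: for every probability vector, `Γ` of the surrogate regret bounds the
zero-one regret. -/
def IsPointwiseConsistent (sel : X → ι) (S : Set X) (ℓ : X → ι → ℝ) (Γ : ℝ → ℝ) : Prop :=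
  ∀ p : ι → ℝ, 0 ≤ p → ∑ j, p j = 1 → ∀ s ∈ S,
    pointwiseRegret S (zeroOneLoss sel) p s ≤ Γ (pointwiseRegret S ℓ p s)

namespace IsPointwiseConsistent

theorem weight_sub_le {Γ : ℝ → ℝ} (h : IsPointwiseConsistent sel S ℓ Γ) (hw : 0 ≤ w)
    (hW : 0 < ∑ j, w j) (hs₀ : s₀ ∈ S) (hs : s ∈ S) :
    w (sel s₀) - w (sel s) ≤ (∑ j, w j) * Γ (pointwiseRegret S ℓ w s / ∑ j, w j) := by
  set W := ∑ j, w j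
  have hp : ∑ j, (W⁻¹ • w) j = 1 := by
    simp only [Pi.smul_apply, smul_eq_mul, ← mul_sum]
    exact inv_mul_cancel₀ hW.ne'
  have hcons := h (W⁻¹ • w) (smul_nonneg (inv_nonneg.2 hW.le) hw) hp s hs
  rw [pointwiseRegret_smul (inv_nonneg.2 hW.le), pointwiseRegret_smul (inv_nonneg.2 hW.le),
    inv_mul_le_iff₀ hW, inv_mul_eq_div] at hcons
  exact (sub_le_pointwiseRegret_zeroOneLoss hw hs₀).trans hcons

theorem weight_sub_le_rpow {α β : ℝ} (h : IsPointwiseConsistent sel S ℓ fun t => β * t ^ α)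
    (hβ : 0 ≤ β) (hℓ : 0 ≤ ℓ) (hw : 0 ≤ w) (hs₀ : s₀ ∈ S) (hs : s ∈ S) :
    w (sel s₀) - w (sel s) ≤ β * (∑ j, w j) ^ (1 - α) * pointwiseRegret S ℓ w s ^ α := by
  have hR := pointwiseRegret_nonneg hℓ hw hs
  rcases (Fintype.sum_nonneg hw).eq_or_lt with hW | hW
  · obtain rfl : w = 0 := (Fintype.sum_eq_zero_iff_of_nonneg hw).1 hW.symm
    rw [Pi.zero_apply, Pi.zero_apply, sub_zero]
    positivity
  · refine (h.weight_sub_le hw hW hs₀ hs).trans_eq ?_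
    rw [Real.div_rpow hR hW.le, Real.rpow_sub hW, Real.rpow_one]
    ring

end IsPointwiseConsistent

end PointwiseRegret

theorem rpow_lower_bound_of_le_mul_rpow {α β M x r : ℝ} (hα : 0 < α) (hβ : 0 < β) (hM : 0 < M)
    (hx : 0 ≤ x) (hr : 0 ≤ r) (h : x ≤ β * M ^ (1 - α) * r ^ α) :
    β ^ (-(1 / α)) * x ^ (1 / α) / M ^ (1 / α - 1) ≤ r := by
  have hroot : x ^ (1 / α) ≤ β ^ (1 / α) * M ^ (1 / α - 1) * r :=
    calc x ^ (1 / α) ≤ (β * M ^ (1 - α) * r ^ α) ^ (1 / α) := by gcongr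
      _ = β ^ (1 / α) * M ^ (1 / α - 1) * r := by
        rw [Real.mul_rpow (by positivity) (by positivity), Real.mul_rpow hβ.le (by positivity),
          ← Real.rpow_mul hM.le, ← Real.rpow_mul hr, mul_one_div_cancel hα.ne', Real.rpow_one,
          sub_mul, one_mul, mul_one_div_cancel hα.ne']
  rw [Real.rpow_neg hβ.le, div_le_iff₀ (by positivity), inv_mul_le_iff₀ (by positivity)]
  linarith

section Deferral

variable {nE : ℕ} {sel : (Fin (nE + 1) → ℝ) → Fin (nE + 1)} {S : Set (Fin (nE + 1) → ℝ)}
  {ℓ : (Fin (nE + 1) → ℝ) → Fin (nE + 1) → ℝ} {A : Set ℝ} {cbar : Fin nE → ℝ} {L : ℝ}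
  {s : Fin (nE + 1) → ℝ}

/-- The label weights with which the surrogate loss enters `C(L,s)`; label `0` is the predictor,
label `j.succ` is expert `j`. -/
def deferralWeight (cbar : Fin nE → ℝ) (L : ℝ) : Fin (nE + 1) → ℝ :=
  Fin.cons (∑ j, cbar j) fun j => L + ∑ j' ∈ univ.erase j, cbar j'

theorem deferralWeight_nonneg (hc : 0 ≤ cbar) (hL : 0 ≤ L) : 0 ≤ deferralWeight cbar L := by
  intro k
  cases k using Fin.cases with
  | zero => exact show 0 ≤ ∑ j, cbar j from Fintype.sum_nonneg hc
  | succ j => exact add_nonneg hL (sum_nonneg fun i _ => hc i)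

theorem deferralWeight_zero_sub_succ (cbar : Fin nE → ℝ) (L : ℝ) (j : Fin nE) :
    deferralWeight cbar L 0 - deferralWeight cbar L j.succ = cbar j - L := by
  simp only [deferralWeight, Fin.cons_zero, Fin.cons_succ, sum_erase_eq_sub (mem_univ j)]
  ring

theorem sum_deferralWeight (cbar : Fin nE → ℝ) (L : ℝ) :
    ∑ j, deferralWeight cbar L j = nE * (L + ∑ j, cbar j) := by
  simp only [deferralWeight, Fin.sum_univ_succ, Fin.cons_zero, Fin.cons_succ, sum_add_distrib,
    sum_erase_eq_sub (mem_univ _), sum_sub_distrib, sum_const, card_univ, Fintype.card_fin,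
    nsmul_eq_mul]
  ring

theorem Ccond_eq_dotProduct (cbar : Fin nE → ℝ) (ℓ : (Fin (nE + 1) → ℝ) → Fin (nE + 1) → ℝ)
    (L : ℝ) (s : Fin (nE + 1) → ℝ) :
    Ccond nE cbar ℓ L s = deferralWeight cbar L ⬝ᵥ ℓ s - ((nE : ℝ) - 1) * L := by
  simp only [Ccond, dotProduct, deferralWeight, Fin.sum_univ_succ, Fin.cons_zero, Fin.cons_succ]

theorem Ccond_eq_affine (cbar : Fin nE → ℝ) (ℓ : (Fin (nE + 1) → ℝ) → Fin (nE + 1) → ℝ)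
    (L : ℝ) (s : Fin (nE + 1) → ℝ) :
    Ccond nE cbar ℓ L s =
      Ccond nE cbar ℓ 0 s + (∑ j : Fin nE, ℓ s j.succ - ((nE : ℝ) - 1)) * L := by
  simp only [Ccond, add_mul, sum_add_distrib, ← mul_sum]
  ring

theorem sub_one_le_sum_succ_of_zeroOneLoss_le (hℓ : zeroOneLoss sel ≤ ℓ)
    (s : Fin (nE + 1) → ℝ) : (nE : ℝ) - 1 ≤ ∑ j : Fin nE, ℓ s j.succ := by
  have htotal : ∑ j, zeroOneLoss sel s j = nE := by
    rw [← one_dotProduct, dotProduct_zeroOneLoss]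
    simp
  have hzero : zeroOneLoss sel s 0 ≤ 1 := by
    unfold zeroOneLoss
    split_ifs <;> simp
  rw [Fin.sum_univ_succ] at htotal
  calc (nE : ℝ) - 1 ≤ ∑ j : Fin nE, zeroOneLoss sel s j.succ := by linarith
    _ ≤ ∑ j : Fin nE, ℓ s j.succ := sum_le_sum fun j _ => hℓ s j.succ

theorem Ccond_mono (hℓ : zeroOneLoss sel ≤ ℓ) (s : Fin (nE + 1) → ℝ) :
    Monotone fun L => Ccond nE cbar ℓ L s := fun L L' hLL' => by
  beta_reduce
  rw [Ccond_eq_affine cbar ℓ L s, Ccond_eq_affine cbar ℓ L' s]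
  have := sub_nonneg.2 (sub_one_le_sum_succ_of_zeroOneLoss_le hℓ s)
  gcongr

theorem continuous_Ccond (cbar : Fin nE → ℝ) (ℓ : (Fin (nE + 1) → ℝ) → Fin (nE + 1) → ℝ)
    (s : Fin (nE + 1) → ℝ) : Continuous fun L => Ccond nE cbar ℓ L s := by
  unfold Ccond
  fun_prop

theorem Ccond_nonneg (hℓ : zeroOneLoss sel ≤ ℓ) (hc : 0 ≤ cbar) (hL : 0 ≤ L)
    (s : Fin (nE + 1) → ℝ) : 0 ≤ Ccond nE cbar ℓ L s := by
  have hzero : 0 ≤ Ccond nE cbar ℓ 0 s := by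
    rw [Ccond_eq_dotProduct, mul_zero, sub_zero]
    exact dotProduct_nonneg_of_nonneg (deferralWeight_nonneg hc le_rfl)
      ((zeroOneLoss_nonneg sel).trans hℓ s)
  exact hzero.trans (Ccond_mono hℓ s hL)

theorem Cstar_le_Ccond (hℓ : zeroOneLoss sel ≤ ℓ) (hc : 0 ≤ cbar) (hA : A ⊆ Set.Ici 0)
    (hL : L ∈ A) (hs : s ∈ S) : Cstar nE cbar ℓ A S ≤ Ccond nE cbar ℓ L s := by
  refine csInf_le ⟨0, ?_⟩ ⟨L, hL, s, hs, rfl⟩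
  rintro _ ⟨L', hL', s', -, rfl⟩
  exact Ccond_nonneg hℓ hc (hA hL') s'

theorem Cstar_le_Ccond_sInf (hℓ : zeroOneLoss sel ≤ ℓ) (hc : 0 ≤ cbar) (hA : A ⊆ Set.Ici 0)
    (hAne : A.Nonempty) (hs : s ∈ S) : Cstar nE cbar ℓ A S ≤ Ccond nE cbar ℓ (sInf A) s := by
  rw [(Ccond_mono hℓ s).map_csInf_of_continuousAt (continuous_Ccond cbar ℓ s).continuousAt hAne
    ⟨0, hA⟩]
  refine le_csInf (hAne.image _) ?_
  rintro _ ⟨L, hL, rfl⟩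
  exact Cstar_le_Ccond hℓ hc hA hL hs

theorem pointwiseRegret_deferralWeight_le (hℓ : zeroOneLoss sel ≤ ℓ) (hc : 0 ≤ cbar)
    (hA : A ⊆ Set.Ici 0) (hL : L ∈ A) (hs : s ∈ S) :
    pointwiseRegret S ℓ (deferralWeight cbar (sInf A)) s ≤
      Ccond nE cbar ℓ L s - Cstar nE cbar ℓ A S := by
  have hmono : Ccond nE cbar ℓ (sInf A) s ≤ Ccond nE cbar ℓ L s :=
    Ccond_mono hℓ s (csInf_le ⟨0, hA⟩ hL)
  have hinf : Cstar nE cbar ℓ A S + ((nE : ℝ) - 1) * sInf A ≤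
      sInf {v | ∃ s' ∈ S, v = deferralWeight cbar (sInf A) ⬝ᵥ ℓ s'} := by
    refine le_csInf ⟨_, s, hs, rfl⟩ ?_
    rintro _ ⟨s', hs', rfl⟩
    have := Cstar_le_Ccond_sInf hℓ hc hA ⟨L, hL⟩ hs'
    rw [Ccond_eq_dotProduct] at this
    linarith
  rw [Ccond_eq_dotProduct] at hmono
  rw [pointwiseRegret]
  linarith

theorem Dcond_of_sel_eq_succ {j : Fin nE} (hsel : sel s = j.succ) :
    Dcond nE cbar sel L s = cbar j := by
  simp [Dcond, hsel, Fin.succ_inj]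

theorem Dstar_eq_sInf [Nonempty (Fin nE)] (hdom : ∀ j, sInf A ≤ cbar j) :
    Dstar nE cbar A = sInf A :=
  min_eq_left (le_ciInf hdom)

theorem caseIII_surrogate_regret_lower_bound_general (hreg : ∃ s₀ ∈ S, sel s₀ = 0)
    (hℓ : zeroOneLoss sel ≤ ℓ) (hA : A ⊆ Set.Ici 0) {B : ℝ} (hB : 0 < B)
    (hcB : sInf A + ∑ j, cbar j ≤ B) {α β : ℝ} (hα : α ∈ Set.Ioc (0 : ℝ) 1) (hβ : 0 < β)
    (hcons : IsPointwiseConsistent sel S ℓ fun t => β * t ^ α) (hL : L ∈ A) (hs : s ∈ S)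
    {j₀ : Fin nE} (hselj : sel s = j₀.succ) (hdom : ∀ j, sInf A ≤ cbar j) :
    β ^ (-(1 / α)) * (cbar j₀ - sInf A) ^ (1 / α) / ((nE : ℝ) * B) ^ (1 / α - 1)
        ≤ Ccond nE cbar ℓ L s - Cstar nE cbar ℓ A S ∧
      cbar j₀ - sInf A = Dcond nE cbar sel L s - Dstar nE cbar A := by
  obtain ⟨s₀, hs₀, hsel₀⟩ := hreg
  have : Nonempty (Fin nE) := ⟨j₀⟩
  refine ⟨?_, by rw [Dcond_of_sel_eq_succ hselj, Dstar_eq_sInf hdom]⟩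
  have hnE : (0 : ℝ) < nE := Nat.cast_pos.2 j₀.pos
  have hℓ0 : 0 ≤ ℓ := (zeroOneLoss_nonneg sel).trans hℓ
  have hc₀ : 0 ≤ sInf A := Real.sInf_nonneg hA
  have hc : 0 ≤ cbar := fun j => hc₀.trans (hdom j)
  have hw : 0 ≤ deferralWeight cbar (sInf A) := deferralWeight_nonneg hc hc₀
  have hregret := pointwiseRegret_nonneg hℓ0 hw hs
  have hgap := hcons.weight_sub_le_rpow hβ.le hℓ0 hw hs₀ hs
  rw [hsel₀, hselj, deferralWeight_zero_sub_succ] at hgap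
  have hmass : ∑ j, deferralWeight cbar (sInf A) j ≤ nE * B := by
    rw [sum_deferralWeight]
    gcongr
  have hscaled : cbar j₀ - sInf A ≤ β * (nE * B) ^ (1 - α) *
      pointwiseRegret S ℓ (deferralWeight cbar (sInf A)) s ^ α := by
    refine hgap.trans ?_
    gcongr
    exacts [Fintype.sum_nonneg hw, sub_nonneg.2 hα.2]
  exact (rpow_lower_bound_of_le_mul_rpow hα.1 hβ (mul_pos hnE hB) (sub_nonneg.2 (hdom j₀)) hregret
    hscaled).trans (pointwiseRegret_deferralWeight_le hℓ hc hA hL hs)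

end Deferral

/-- Case III of the proof of Theorem 3.1, conditional form. -/
theorem caseIII_surrogate_regret_lower_bound (nE : ℕ) (hnE : 1 ≤ nE)
    (sel : (Fin (nE + 1) → ℝ) → Fin (nE + 1))
    (hsel : ∀ (s : Fin (nE + 1) → ℝ) (j : Fin (nE + 1)), s j ≤ s (sel s))
    (S : Set (Fin (nE + 1) → ℝ)) (hS : S.Nonempty)
    (hreg : ∀ j : Fin (nE + 1), ∃ s ∈ S, sel s = j)
    (ℓ : (Fin (nE + 1) → ℝ) → Fin (nE + 1) → ℝ)
    (hℓ0 : ∀ s j, 0 ≤ ℓ s j)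
    (hℓ1 : ∀ s j, j ≠ sel s → 1 ≤ ℓ s j)
    (lbar : ℝ) (hlbar : 0 < lbar)
    (C : Fin nE → ℝ) (hC : ∀ j, 0 < C j)
    (A : Set ℝ) (hA : A.Nonempty) (hAsub : A ⊆ Set.Icc 0 lbar)
    (cbar : Fin nE → ℝ) (hcbar : ∀ j, cbar j ∈ Set.Icc 0 (C j))
    (α β : ℝ) (hα : α ∈ Set.Ioc (0 : ℝ) 1) (hβ : 0 < β)
    (hcons : ∀ p : Fin (nE + 1) → ℝ, (∀ j, 0 ≤ p j) → (∑ j, p j) = 1 → ∀ s ∈ S,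
      (∑ j, p j * (if sel s ≠ j then (1 : ℝ) else 0))
          - sInf {v | ∃ s' ∈ S, v = ∑ j, p j * (if sel s' ≠ j then (1 : ℝ) else 0)}
        ≤ β * ((∑ j, p j * ℓ s j)
          - sInf {v | ∃ s' ∈ S, v = ∑ j, p j * ℓ s' j}) ^ α)
    (L : ℝ) (hL : L ∈ A) (s : Fin (nE + 1) → ℝ) (hs : s ∈ S)
    (j₀ : Fin nE) (hselj : sel s = j₀.succ)
    (hdom : ∀ j, sInf A ≤ cbar j) :
    β ^ (-(1 / α)) * (cbar j₀ - sInf A) ^ (1 / α)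
          / ((nE : ℝ) * (lbar + ∑ j, C j)) ^ (1 / α - 1)
        ≤ Ccond nE cbar ℓ L s - Cstar nE cbar ℓ A S ∧
      cbar j₀ - sInf A = Dcond nE cbar sel L s - Dstar nE cbar A := by
  have hcB : sInf A + ∑ j, cbar j ≤ lbar + ∑ j, C j :=
    add_le_add ((csInf_le ⟨0, fun x hx => (hAsub hx).1⟩ hL).trans (hAsub hL).2)
      (sum_le_sum fun j _ => (hcbar j).2)
  exact caseIII_surrogate_regret_lower_bound_general (hreg 0) (zeroOneLoss_le hℓ0 hℓ1)
    (fun x hx => (hAsub hx).1)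
    (add_pos_of_pos_of_nonneg hlbar (sum_nonneg fun j _ => (hC j).le)) hcB hα hβ hcons hL hs hselj
    hdom
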